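/- Let u, v ∈ F₂ with ‖u‖ ≥ ‖v‖, let ψ be a chain of type (C1) that contains at least ‖u‖+2 factors of σ and that ends in τ (i.e., ψ = τψ₂ for some chain ψ₂ of type (C1)), and put k = ‖u‖+1. Suppose that for every chain ψ' of type (C1) with |ψ'| ≤ |ψ| one has: ‖σ^{k+1}ψ'(u)‖ = ‖σ^{k}ψ'(u)‖ if and only if ‖σ^{k+1}ψ'(v)‖ = ‖σ^{k}ψ'(v)‖, and ‖τ^{k+1}ψ'(u)‖ = ‖τ^{k}ψ'(u)‖ if and only if ‖τ^{k+1}ψ'(v)‖ = ‖τ^{k}ψ'(v)‖. Then ‖τψ(u)‖ = ‖ψ(u)‖ if and only if ‖τψ(v)‖ = ‖ψ(v)‖. -/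

import Mathlib

noncomputable section

/-- The free group of rank two. -/
abbrev F : Type := FreeGroup (Fin 2)

/-- The generator `a`. -/
def ga : F := FreeGroup.of 0

/-- The generator `b`. -/
def gb : F := FreeGroup.of 1

/-- Build an automorphism of `F` from images of the generators together with
an explicit inverse. -/
def mkAut (x y xi yi : F)
    (h1 : FreeGroup.lift ![xi, yi] x = ga)
    (h2 : FreeGroup.lift ![xi, yi] y = gb)
    (h3 : FreeGroup.lift ![x, y] xi = ga)
    (h4 : FreeGroup.lift ![x, y] yi = gb) : MulAut F :=
  MonoidHom.toMulEquiv (FreeGroup.lift ![x, y]) (FreeGroup.lift ![xi, yi])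
    (by
      ext i
      fin_cases i
      · simpa [ga] using h1
      · simpa [gb] using h2)
    (by
      ext i
      fin_cases i
      · simpa [ga] using h3
      · simpa [gb] using h4)

/-- `σ : a ↦ ab, b ↦ b`. -/
def σ : MulAut F :=
  mkAut (ga * gb) gb (ga * gb⁻¹) gb
    (by simp [ga, gb]) (by simp [ga, gb]) (by simp [ga, gb]) (by simp [ga, gb])

/-- `τ : a ↦ a, b ↦ ba`. -/
def τ : MulAut F :=
  mkAut ga (gb * ga) ga (gb * ga⁻¹)
    (by simp [ga, gb]) (by simp [ga, gb]) (by simp [ga, gb]) (by simp [ga, gb])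

/-- `δ₁ : a ↦ b⁻¹ab, b ↦ b`. -/
def δ₁ : MulAut F :=
  mkAut (gb⁻¹ * ga * gb) gb (gb * ga * gb⁻¹) gb
    (by simp [ga, gb, mul_assoc]) (by simp [ga, gb]) (by simp [ga, gb, mul_assoc]) (by simp [ga, gb])

/-- `δ₂ : a ↦ bab⁻¹, b ↦ b`. -/
def δ₂ : MulAut F :=
  mkAut (gb * ga * gb⁻¹) gb (gb⁻¹ * ga * gb) gb
    (by simp [ga, gb, mul_assoc]) (by simp [ga, gb]) (by simp [ga, gb, mul_assoc]) (by simp [ga, gb])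

/-- `δ₃ : a ↦ a, b ↦ a⁻¹ba`. -/
def δ₃ : MulAut F :=
  mkAut ga (ga⁻¹ * gb * ga) ga (ga * gb * ga⁻¹)
    (by simp [ga, gb]) (by simp [ga, gb, mul_assoc]) (by simp [ga, gb]) (by simp [ga, gb, mul_assoc])

/-- `δ₄ : a ↦ a, b ↦ aba⁻¹`. -/
def δ₄ : MulAut F :=
  mkAut ga (ga * gb * ga⁻¹) ga (ga⁻¹ * gb * ga)
    (by simp [ga, gb]) (by simp [ga, gb, mul_assoc]) (by simp [ga, gb]) (by simp [ga, gb, mul_assoc])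

/-- `π : a ↦ b, b ↦ a⁻¹`. -/
def pi' : MulAut F :=
  mkAut gb ga⁻¹ gb⁻¹ ga
    (by simp [ga, gb]) (by simp [ga, gb]) (by simp [ga, gb]) (by simp [ga, gb])

/-- Word length of (the reduced word representing) an element of `F`. -/
def len (w : F) : ℕ := w.toWord.length

/-- Cyclic length: minimal word length among all conjugates. -/
def cyclen (w : F) : ℕ := sInf {n | ∃ g : F, len (g * w * g⁻¹) = n}

/-- The chain `τ^{m_k}σ^{l_k}⋯τ^{m_1}σ^{l_1}` of type (C1) determined by the list
`[(l_k, m_k), …, (l_1, m_1)]` of pairs of exponents. -/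
def chainC1 (c : List (ℕ × ℕ)) : MulAut F :=
  (c.map fun p => τ ^ p.2 * σ ^ p.1).prod

/-- The chain `τ^{-m_k}σ^{-l_k}⋯τ^{-m_1}σ^{-l_1}` of type (C2) determined by the list
`[(l_k, m_k), …, (l_1, m_1)]` of pairs of exponents. -/
def chainC2 (c : List (ℕ × ℕ)) : MulAut F :=
  (c.map fun p => (τ ^ p.2)⁻¹ * (σ ^ p.1)⁻¹).prod

/-- Number of factors of `σ` in a chain. -/
def sigmaCount (c : List (ℕ × ℕ)) : ℕ := (c.map Prod.fst).sum

/-- Number of factors of `τ` in a chain. -/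
def tauCount (c : List (ℕ × ℕ)) : ℕ := (c.map Prod.snd).sum

/-- The length `Σ (l_i + m_i)` of a chain. -/
def chainLen (c : List (ℕ × ℕ)) : ℕ := sigmaCount c + tauCount c

/-- A Whitehead automorphism of type (W1): it permutes `{a, a⁻¹, b, b⁻¹}`. -/
def IsW1 (β : MulAut F) : Prop :=
  β ga ∈ ({ga, ga⁻¹, gb, gb⁻¹} : Set F) ∧ β gb ∈ ({ga, ga⁻¹, gb, gb⁻¹} : Set F)

/-- A chain of type (C1). -/
def IsC1 (φ : MulAut F) : Prop := ∃ c : List (ℕ × ℕ), c ≠ [] ∧ φ = chainC1 c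

/-- A chain of type (C2). -/
def IsC2 (φ : MulAut F) : Prop := ∃ c : List (ℕ × ℕ), c ≠ [] ∧ φ = chainC2 c

/-- A positive element: a product of the generators `a` and `b`. -/
def IsPositive (w : F) : Prop := w ∈ Submonoid.closure ({ga, gb} : Set F)

/-- The four automorphisms `δ₁, δ₂, δ₃, δ₄`. -/
def δIdx : Fin 4 → MulAut F := ![δ₁, δ₂, δ₃, δ₄]

/-- The four letters. -/
inductive Lt where
  | a : Lt
  | A : Lt
  | b : Lt
  | B : Lt
deriving DecidableEq

namespace Lt

/-- inverse letter -/
def inv : Lt → Lt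
  | a => A
  | A => a
  | b => B
  | B => b

/-- the letter map `a ↔ b⁻¹`, `b ↔ a⁻¹` -/
def th : Lt → Lt
  | a => B
  | A => b
  | b => A
  | B => a

/-- is the letter `a^{±1}`? -/
def isA : Lt → Bool
  | a => true
  | A => true
  | b => false
  | B => false

/-- cancelling junction -/
def jn : Lt → Lt → Bool
  | a, B => true
  | b, A => true
  | _, _ => false

/-- adjacent letters do not cancel -/
def ok : Lt → Lt → Bool
  | a, A => false
  | A, a => false
  | b, B => false
  | B, b => false
  | _, _ => true

/-- local output of `σ` -/
def out (p x n : Lt) : List Lt :=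
  match x with
  | a => if n = B then [a] else [a, b]
  | A => if p = b then [A] else [B, A]
  | b => if n = A then [] else [b]
  | B => if p = a then [] else [B]

/-- the underlying group element -/
def g : Lt → F
  | a => ga
  | A => ga⁻¹
  | b => gb
  | B => gb⁻¹

end Lt

open Lt

/-- evaluation of a word -/
def ev (L : List Lt) : F := (L.map Lt.g).prod

/-- `σ` on words with context -/
def T : Lt → List Lt → Lt → List Lt
  | _, [], _ => []
  | p, x :: L, y => out p x (L.headD y) ++ T x L y

/-- `σ` on cyclic words -/
def Tc (L : List Lt) : List Lt := T (L.getLastD Lt.a) L (L.headD Lt.a)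

/-- inverse word -/
def iv (L : List Lt) : List Lt := (L.map Lt.inv).reverse

/-- `θ` on words -/
def tht (L : List Lt) : List Lt := L.map Lt.th

/-- last `a`-letter -/
def stA (s : Lt) : List Lt → Lt
  | [] => s
  | x :: L => stA (if x.isA then x else s) L

/-- first `a`-letter -/
def nxA : List Lt → Lt → Lt
  | [], z => z
  | x :: L, z => if x.isA then x else nxA L z

/-- number of letters `b` lying between `a⁻¹` and `a⁻¹` -/
def P : Lt → List Lt → Lt → ℕ
  | _, [], _ => 0
  | s, x :: L, z => (if x = Lt.b ∧ s = Lt.A ∧ nxA L z = Lt.A then 1 else 0) +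
      P (if x.isA then x else s) L z

/-- cyclic version of `P` -/
def Pc (L : List Lt) : ℕ := P (stA Lt.b L) L (nxA L Lt.b)

/-- chain condition with both contexts -/
def Ch (R : Lt → Lt → Prop) : Lt → List Lt → Lt → Prop
  | p, [], y => R p y
  | p, x :: L, y => R p x ∧ Ch R x L y

/-- chain condition with left context -/
def ChL (R : Lt → Lt → Prop) : Lt → List Lt → Prop
  | _, [] => True
  | p, x :: L => R p x ∧ ChL R x L

/-- cyclically reduced -/
def CR (L : List Lt) : Prop := ChL (fun x y => ok x y = true) (L.getLastD Lt.a) L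

lemma ChL_toCh (R : Lt → Lt → Prop) (L : List Lt) (p y : Lt) (h : ChL R p L)
    (h2 : R (L.getLastD p) y) : Ch R p L y := by
  induction L generalizing p with
  | nil => simpa [Ch] using h2
  | cons x L ih =>
    refine ⟨h.1, ih x h.2 ?_⟩
    rwa [List.getLastD_cons] at h2

lemma getLastD_ne {L : List Lt} (h : L ≠ []) (p q : Lt) : L.getLastD p = L.getLastD q := by
  cases L with
  | nil => exact absurd rfl h
  | cons x L => simp only [List.getLastD_cons]

lemma Ch_cyc (R : Lt → Lt → Prop) (L : List Lt) (hL : L ≠ []) (c : Lt)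
    (h : ChL R (L.getLastD c) L) : Ch R (L.getLastD c) L (L.headD c) := by
  apply ChL_toCh _ _ _ _ h
  cases L with
  | nil => exact absurd rfl hL
  | cons x L =>
    have := h.1
    simpa only [List.getLastD_cons, List.headD_cons] using this

/-! ### Relation with the group -/

lemma σ_ga : σ ga = ga * gb := by simp [σ, mkAut, ga]
lemma σ_gb : σ gb = gb := by simp [σ, mkAut, gb]
lemma τ_ga : τ ga = ga := by simp [τ, mkAut, ga]
lemma τ_gb : τ gb = gb * ga := by simp [τ, mkAut, gb]

/-- correction factor -/
def cf (p x : Lt) : F := if jn p x then gb else 1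

lemma ev_out (p x n : Lt) : ev (out p x n) = cf p x * σ x.g * (cf x n)⁻¹ := by
  cases p <;> cases x <;> cases n <;> simp [ev, out, cf, jn, Lt.g, σ_ga, σ_gb]

lemma ev_append (L M : List Lt) : ev (L ++ M) = ev L * ev M := by simp [ev]

lemma ev_T (p : Lt) (L : List Lt) (y : Lt) :
    ev (T p L y) = cf p (L.headD y) * σ (ev L) * (cf (L.getLastD p) y)⁻¹ := by
  induction L generalizing p with
  | nil => simp [T, ev]
  | cons x L ih =>
    have h1 : ev (x :: L) = x.g * ev L := by simp [ev]
    rw [T, ev_append, ih, ev_out, h1, List.getLastD_cons, map_mul]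
    simp only [List.headD_cons]
    group

/-- `L` represents the conjugacy class of `w` -/
def Rp (w : F) (L : List Lt) : Prop := CR L ∧ ∃ h : F, w = h * ev L * h⁻¹

lemma T_nil_cyc : Tc [] = [] := rfl

lemma ev_Tc (L : List Lt) : ∃ h : F, σ (ev L) = h * ev (Tc L) * h⁻¹ := by
  refine ⟨(cf (L.getLastD Lt.a) (L.headD Lt.a))⁻¹, ?_⟩
  rw [Tc, ev_T, show (L.getLastD (L.getLastD Lt.a)) = L.getLastD Lt.a by
    cases L <;> simp only [List.getLastD_cons, List.getLastD_nil],
    show (L.headD (L.headD Lt.a)) = L.headD Lt.a by cases L <;> rfl]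
  group

/-- `a ↦ b⁻¹`, `b ↦ a⁻¹` -/
def TH : F →* F := FreeGroup.lift ![gb⁻¹, ga⁻¹]

lemma TH_ga : TH ga = gb⁻¹ := by simp [TH, ga]
lemma TH_gb : TH gb = ga⁻¹ := by simp [TH, gb]

lemma TH_ev (L : List Lt) : TH (ev L) = ev (tht L) := by
  induction L with
  | nil => simp [ev, tht]
  | cons x L ih =>
    have h1 : ev (x :: L) = x.g * ev L := by simp [ev]
    have h2 : ev (tht (x :: L)) = x.th.g * ev (tht L) := by simp [ev, tht]
    rw [h1, h2, map_mul, ih]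
    congr 1
    cases x <;> simp [Lt.g, Lt.th, TH_ga, TH_gb]

lemma τ_eq (w : F) : τ w = ga⁻¹ * TH (σ (TH w)) * ga := by
  have : (τ.toMonoidHom : F →* F) =
      ((MulAut.conj ga⁻¹).toMonoidHom.comp (TH.comp (σ.toMonoidHom.comp TH))) := by
    ext i
    fin_cases i
    · have := τ_ga; have h2 := TH_ga; have h3 := TH_gb; have h4 := σ_gb
      simp only [ga] at *
      simp [this, h2, h3, h4]
    · have h1 := τ_gb; have h2 := TH_ga; have h3 := TH_gb; have h4 := σ_gb; have h5 := σ_ga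
      change τ gb = ga⁻¹ * TH (σ (TH gb)) * (ga⁻¹)⁻¹
      rw [h1, h3]
      simp [h5, h2, h3]
  have := DFunLike.congr_fun this w
  simpa using this

lemma ev_iv (L : List Lt) : ev (iv L) = (ev L)⁻¹ := by
  induction L with
  | nil => simp [ev, iv]
  | cons x L ih =>
    have h1 : ev (x :: L) = x.g * ev L := by simp [ev]
    have h2 : iv (x :: L) = iv L ++ [x.inv] := by simp [iv]
    rw [h1, h2, ev_append, ih, mul_inv_rev]
    congr 1
    cases x <;> simp [ev, Lt.g, Lt.inv]

/-- to Mathlib letters -/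
def tl : Lt → Fin 2 × Bool
  | Lt.a => (0, true)
  | Lt.A => (0, false)
  | Lt.b => (1, true)
  | Lt.B => (1, false)

lemma tl_surj (x : Fin 2 × Bool) : ∃ l, tl l = x := by
  obtain ⟨i, c⟩ := x
  fin_cases i <;> cases c
  exacts [⟨Lt.A, rfl⟩, ⟨Lt.a, rfl⟩, ⟨Lt.B, rfl⟩, ⟨Lt.b, rfl⟩]

lemma mk_tl (L : List Lt) : FreeGroup.mk (L.map tl) = ev L := by
  induction L with
  | nil => simp [ev, FreeGroup.one_eq_mk]
  | cons x L ih =>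
    have h1 : ev (x :: L) = x.g * ev L := by simp [ev]
    rw [h1, ← ih, List.map_cons, show tl x :: L.map tl = [tl x] ++ L.map tl from rfl,
      ← FreeGroup.mul_mk]
    congr 1
    cases x <;> simp [tl, Lt.g, ga, gb, FreeGroup.of, FreeGroup.inv_mk, FreeGroup.invRev]

lemma ok_iff (x y : Lt) : ok x y = true ↔ ((tl x).1 = (tl y).1 → (tl x).2 = (tl y).2) := by
  cases x <;> cases y <;> simp [ok, tl]

lemma ChL_iff (R : Lt → Lt → Prop) (p : Lt) (L : List Lt) :
    ChL R p L ↔ List.IsChain R (p :: L) := by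
  induction L generalizing p with
  | nil => simp [ChL]
  | cons x L ih => simp [ChL, ih]

lemma CR_iff (L : List Lt) : CR L ↔ FreeGroup.IsCyclicallyReduced (L.map tl) := by
  rw [FreeGroup.isCyclicallyReduced_iff, FreeGroup.IsReduced, List.isChain_map, CR, ChL_iff]
  simp only [ok_iff]
  cases L with
  | nil => simp
  | cons x L =>
    rw [List.isChain_cons_cons, and_comm]
    simp [List.getLast?_cons]
    
lemma len_pow_le (w : F) (n : ℕ) : len (w ^ n) ≤ n * len w := by
  induction n with
  | zero => simp [len]
  | succ n ih =>
    rw [pow_succ]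
    have := FreeGroup.norm_mul_le (w ^ n) w
    simp only [FreeGroup.norm] at this
    simp only [len] at *
    linarith

lemma CR_len (L : List Lt) (h : CR L) (x : F) :
    L.length ≤ len (x * ev L * x⁻¹) := by
  rw [CR_iff] at h
  set n := 2 * len x + 1 with hn
  have h1 : len (ev L ^ n) = n * L.length := by
    have := (h.flatten_replicate n).1.reduce_eq
    rw [len, FreeGroup.toWord_pow, ← mk_tl, FreeGroup.toWord_mk, h.1.reduce_eq, this]
    simp
  have h2 : ev L ^ n = x⁻¹ * (x * ev L * x⁻¹) ^ n * x := by
    rw [conj_pow]; group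
  have h3 := FreeGroup.norm_mul_le (x⁻¹ * (x * ev L * x⁻¹) ^ n) x
  have h4 := FreeGroup.norm_mul_le (x⁻¹) ((x * ev L * x⁻¹) ^ n)
  have h5 := len_pow_le (x * ev L * x⁻¹) n
  rw [FreeGroup.norm_inv_eq] at h4
  rw [← h2] at h3
  simp only [FreeGroup.norm] at h3 h4
  simp only [len] at *
  by_contra hc
  push Not at hc
  nlinarith

lemma Rp_cyclen {w : F} {L : List Lt} (h : Rp w L) : cyclen w = L.length := by
  obtain ⟨h1, y, rfl⟩ := h
  apply le_antisymm
  · apply Nat.sInf_le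
    refine ⟨y⁻¹, ?_⟩
    rw [show y⁻¹ * (y * ev L * y⁻¹) * y⁻¹⁻¹ = ev L by group, ← mk_tl, len, FreeGroup.toWord_mk,
      ((CR_iff L).1 h1).1.reduce_eq, List.length_map]
  · apply le_csInf
    · exact ⟨_, 1, rfl⟩
    · rintro n ⟨x, rfl⟩
      have := CR_len L h1 (x * y)
      rw [show x * y * ev L * (x * y)⁻¹ = x * (y * ev L * y⁻¹) * x⁻¹ by group] at this
      exact this

lemma Rp_exists (w : F) : ∃ L, Rp w L := by
  have h1 := FreeGroup.reduceCyclically.isCyclicallyReduced (FreeGroup.isReduced_toWord (x := w))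
  have h2 := FreeGroup.reduceCyclically.conj_conjugator_reduceCyclically w.toWord
  obtain ⟨L, hL⟩ : ∃ L : List Lt, L.map tl = FreeGroup.reduceCyclically w.toWord := by
    exact List.map_surjective_iff.2 tl_surj _
  refine ⟨L, (CR_iff L).2 (hL ▸ h1), FreeGroup.mk (FreeGroup.reduceCyclically.conjugator w.toWord), ?_⟩
  rw [← mk_tl, hL, FreeGroup.inv_mk, FreeGroup.mul_mk, FreeGroup.mul_mk, h2, FreeGroup.mk_toWord]

lemma getLastD_idem (L : List Lt) (c : Lt) : L.getLastD (L.getLastD c) = L.getLastD c := by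
  cases L <;> simp only [List.getLastD_cons, List.getLastD_nil]

/-! ### Combinatorics -/

lemma stA_T (s p : Lt) (L : List Lt) (y : Lt) : stA s (T p L y) = stA s L := by
  induction L generalizing s p with
  | nil => rfl
  | cons x L ih =>
    cases x <;> simp only [T, out] <;> split_ifs <;> simp [stA, isA, ih]

lemma nxA_T (p : Lt) (L : List Lt) (y z : Lt) : nxA (T p L y) z = nxA L z := by
  induction L generalizing p with
  | nil => rfl
  | cons x L ih =>
    cases x <;> simp only [T, out] <;> split_ifs <;> simp [nxA, isA, ih]

lemma P_T_le (s p : Lt) (L : List Lt) (y z : Lt) : P s (T p L y) z ≤ P s L z := by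
  induction L generalizing s p with
  | nil => simp [T]
  | cons x L ih =>
    cases x <;> simp only [T, out] <;> split_ifs <;>
      simp [P, nxA, isA, ih, nxA_T, Nat.le_add_left_of_le]

lemma Pc_T_le (L : List Lt) : Pc (Tc L) ≤ Pc L := by
  unfold Pc Tc
  rw [stA_T, nxA_T]
  exact P_T_le _ _ _ _ _

lemma P_strict1 (s p : Lt) (L : List Lt) (y z : Lt) (hc : Ch (fun x y => ok x y = true) p L y)
    (hy : y.isA = true → z = y) (hP : 0 < P s L z) (he : P s L z ≤ P s (T p L y) z) :
    L.getLastD p = Lt.b ∧ stA s L = Lt.A ∧ z = Lt.A ∧ y = Lt.b := by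
  induction L generalizing s p with
  | nil => simp [P] at hP
  | cons x L ih =>
    rw [List.getLastD_cons, stA]
    have hle := P_T_le (if x.isA then x else s) x L y z
    by_cases hpos : 0 < P (if x.isA then x else s) L z
    · apply ih _ _ hc.2 hpos
      revert he
      cases x <;> simp only [T, out] <;> split <;> simp [P, nxA, isA, nxA_T] <;> omega
    · simp only [P] at hP
      have hx : x = Lt.b ∧ s = Lt.A ∧ nxA L z = Lt.A := by
        by_contra h
        rw [if_neg h] at hP
        omega
      obtain ⟨rfl, rfl, h3⟩ := hx
      cases L with
      | nil =>
        simp only [nxA] at h3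
        subst h3
        have h2 := hc.2
        simp only [Ch] at h2
        cases y <;> simp [isA, ok, stA, T, out, P] at *
        simp [nxA] at he
      | cons x2 L =>
        exfalso
        have h2 := hc.2.1
        cases x2 <;> simp [isA, ok, T, out, P, nxA] at *
        · have := P_T_le Lt.A Lt.A L y z
          omega
        · exact hpos.1 h3

lemma P_strict2 (p : Lt) (L : List Lt) (z : Lt) (hc : Ch (fun x y => ok x y = true) p L Lt.b)
    (hp : p = Lt.b)
    (hn : nxA L z = Lt.A)
    (he : P Lt.A (Lt.b :: L) z ≤ P Lt.A (T Lt.b (Lt.b :: L) Lt.b) z) : nxA L Lt.b = Lt.b := by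
  subst hp
  induction L with
  | nil => rfl
  | cons x L ih =>
    have h1 := hc.1
    cases x
    · simp [nxA, isA] at hn
    · exfalso
      have h := P_T_le Lt.A Lt.b (Lt.A :: L) Lt.b z
      simp [P, T, out, nxA, isA] at he h
      omega
    · simp only [nxA, isA]
      have hnp : nxA L z = Lt.A := by simpa [nxA, isA] using hn
      refine ih hnp ?_ hc.2
      have e1 : P Lt.A (Lt.b :: Lt.b :: L) z = 1 + P Lt.A (Lt.b :: L) z := by
        rw [P]
        simp [nxA, isA, hnp]
      have e2 : P Lt.A (T Lt.b (Lt.b :: Lt.b :: L) Lt.b) z =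
          1 + P Lt.A (T Lt.b (Lt.b :: L) Lt.b) z := by
        rw [T, List.headD_cons, show out Lt.b Lt.b Lt.b = [Lt.b] from rfl, List.singleton_append,
          P, nxA_T]
        simp [nxA, isA, hnp]
      omega
    · simp [ok] at h1


lemma stA_eq_of_isA (s : Lt) (L : List Lt) (h : nxA L Lt.b = Lt.A) (t : Lt) : stA s L = stA t L := by
  induction L generalizing s t with
  | nil => simp [nxA] at h
  | cons x L ih =>
    cases x <;> simp [nxA, isA, stA] at * <;> exact ih _ h _

lemma nxA_head (c : Lt) (L : List Lt) (hL : L ≠ []) (h : (L.headD c).isA = true) (d : Lt) :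
    nxA L d = L.headD c := by
  cases L with
  | nil => exact absurd rfl hL
  | cons x L => simp only [List.headD_cons] at *; simp [nxA, h]

lemma Pc_nil : Pc [] = 0 := rfl

lemma Pc_strict (L : List Lt) (hc : CR L) (hP : 0 < Pc L) : Pc (Tc L) < Pc L := by
  by_contra hlt
  push Not at hlt
  have hL : L ≠ [] := by rintro rfl; simp [Pc_nil] at hP
  have hch := Ch_cyc _ L hL Lt.a hc
  unfold Pc Tc at hlt
  rw [stA_T, nxA_T] at hlt
  obtain ⟨h1, h2, h3, h4⟩ := P_strict1 _ _ _ _ _ hch (fun h => nxA_head _ L hL h _) hP hlt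
  rw [stA_eq_of_isA _ L h3 Lt.b] at h2
  rw [h2, h3, h4] at hlt
  cases L with
  | nil => exact hL rfl
  | cons x L =>
    simp only [List.headD_cons] at h4
    subst h4
    have h1p : (Lt.b :: L).getLastD Lt.a = Lt.b := by rw [getLastD_idem] at h1; exact h1
    rw [h1p] at hlt
    have h3p : nxA L Lt.b = Lt.A := by simpa [nxA, isA] using h3
    have := P_strict2 Lt.b L Lt.A hch.2 rfl ?_ hlt
    · rw [this] at h3p; cases h3p
    · clear hlt hch hc hP h1 h2 h1p h3
      induction L with
      | nil => rfl
      | cons x L ih =>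
        simp only [nxA] at *
        split_ifs at * with h
        · exact h3p
        · exact ih (by simp) h3p
/-! ### the other potential -/

/-- first `b`-letter -/
def nxB : List Lt → Lt → Lt
  | [], z => z
  | x :: L, z => if x.isA then nxB L z else x

/-- last `b`-letter -/
def stB (s : Lt) : List Lt → Lt
  | [] => s
  | x :: L => stB (if x.isA then s else x) L

/-- number of letters `a⁻¹` between `b` and `b` -/
def Pb : Lt → List Lt → Lt → ℕ
  | _, [], _ => 0
  | s, x :: L, z => (if x = Lt.A ∧ s = Lt.b ∧ nxB L z = Lt.b then 1 else 0) +
      Pb (if x.isA then s else x) L z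

/-- number of `b a⁻¹ b` -/
def R : Lt → List Lt → Lt → ℕ
  | _, [], _ => 0
  | p, x :: L, y => (if x = Lt.A ∧ p = Lt.b ∧ L.headD y = Lt.b then 1 else 0) + R x L y

lemma th_th (x : Lt) : x.th.th = x := by cases x <;> rfl

lemma tht_tht (L : List Lt) : tht (tht L) = L := by
  induction L with
  | nil => rfl
  | cons x L ih =>
    change x.th.th :: tht (tht L) = _
    rw [th_th, ih]

lemma nxA_tht (L : List Lt) (z : Lt) : nxA (tht L) z.th = (nxB L z).th := by
  induction L with
  | nil => rfl
  | cons x L ih =>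
    change nxA (x.th :: tht L) z.th = _
    cases x
    · exact ih
    · exact ih
    · rfl
    · rfl

lemma stA_tht (s : Lt) (L : List Lt) : stA s.th (tht L) = (stB s L).th := by
  induction L generalizing s with
  | nil => rfl
  | cons x L ih =>
    change stA s.th (x.th :: tht L) = _
    rw [stA, stB, ← ih]
    cases x <;> simp [isA, th]

lemma P_tht (s : Lt) (L : List Lt) (z : Lt) : P s.th (tht L) z.th = Pb s L z := by
  induction L generalizing s with
  | nil => rfl
  | cons x L ih =>
    change P s.th (x.th :: tht L) z.th = _
    rw [P, Pb, nxA_tht, ← ih]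
    generalize nxB L z = w
    congr 1
    · cases x <;> cases s <;> cases w <;> simp [th]
    · cases x <;> simp [isA, th]

lemma Pc_tht (L : List Lt) : Pc (tht L) = Pb (stB Lt.A L) L (nxB L Lt.A) := by
  rw [Pc, ← P_tht, ← stA_tht, ← nxA_tht]
  rfl

lemma R_le (s p : Lt) (L : List Lt) (y z : Lt) (hp : p = Lt.b → s = Lt.b)
    (hy : y = Lt.b → z = Lt.b) : R p L y ≤ Pb s L z := by
  induction L generalizing s p with
  | nil => simp [R]
  | cons x L ih =>
    rw [R, Pb]
    refine Nat.add_le_add ?_ (ih _ _ ?_)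
    · have : L.headD y = Lt.b → nxB L z = Lt.b := by
        cases L with
        | nil => simpa [nxB] using hy
        | cons x L =>
          simp only [List.headD_cons]
          rintro rfl
          simp [nxB, isA]
      split_ifs <;> simp_all
    · cases x <;> simp [isA]

lemma Pb_T_le (s p : Lt) (L : List Lt) (y z : Lt) (hc : Ch (fun x y => ok x y = true) p L y)
    (hz : L.getLastD p = Lt.A → (y = Lt.A ∨ y = Lt.B) → z ≠ Lt.b) :
    Pb s (T p L y) z ≤ R p L y := by
  induction L generalizing s p with
  | nil => simp [T, Pb]
  | cons x L ih =>
    rw [List.getLastD_cons] at hz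
    have ihp := fun s => ih s x hc.2 hz
    have hn : x = Lt.A → L.headD y ≠ Lt.b → nxB (T x L y) z ≠ Lt.b := by
      rintro rfl hb
      cases L with
      | nil =>
        simp only [List.headD_nil] at hb
        simp only [T, nxB]
        apply hz rfl
        have h2 := hc.2
        simp only [Ch] at h2
        cases y <;> simp [ok] at *
      | cons x L =>
        have h2 := hc.2.1
        simp only [List.headD_cons] at hb
        cases x <;> simp [ok, T, out, nxB, isA] at *
    rw [R, T]
    cases x
    · simp only [out]
      split <;> simpa [Pb, isA] using ihp _
    · simp only [out]
      by_cases hh : L.headD y = Lt.b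
      · split
        · simp only [List.singleton_append, Pb, isA, if_true]
          refine Nat.add_le_add ?_ (ihp _)
          split_ifs <;> simp_all
        · simpa [Pb, isA] using Nat.le_add_left_of_le (ihp _)
      · split <;> simpa [Pb, isA, hn rfl hh] using Nat.le_add_left_of_le (ihp _)
    · simp only [out]
      split <;> simpa [Pb, isA] using ihp _
    · simp only [out]
      split <;> simpa [Pb, isA] using ihp _

lemma stB_last (s c : Lt) (L : List Lt) (hL : L ≠ []) (h : L.getLastD c = Lt.b) :
    stB s L = Lt.b := by
  induction L generalizing s c with
  | nil => exact absurd rfl hL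
  | cons x L ih =>
    rw [List.getLastD_cons] at h
    rw [stB]
    cases L with
    | nil => simp only [List.getLastD_nil] at h; subst h; rfl
    | cons x2 L => exact ih _ _ (by simp) h

lemma nxB_head (c : Lt) (L : List Lt) (hL : L ≠ []) (h : L.headD c = Lt.b) (d : Lt) :
    nxB L d = Lt.b := by
  cases L with
  | nil => exact absurd rfl hL
  | cons x L => simp only [List.headD_cons] at h; subst h; rfl

lemma Pc_tht_T_le (L : List Lt) (hc : CR L) : Pc (tht (Tc L)) ≤ Pc (tht L) := by
  by_cases hL : L = []
  · subst hL; rfl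
  have hch := Ch_cyc _ L hL Lt.a hc
  rw [Pc_tht, Pc_tht]
  refine le_trans (Pb_T_le _ _ _ _ _ hch ?_)
    (R_le _ _ _ _ _ (fun h => stB_last _ _ _ hL h) (fun h => nxB_head _ _ hL h _))
  cases L with
  | nil => exact absurd rfl hL
  | cons x L =>
    simp only [List.getLastD_cons, List.headD_cons]
    intro h1 h2
    rw [Tc, T, List.getLastD_cons, h1]
    rcases h2 with rfl | rfl <;> simp [out, nxB, isA]

/-! ### output is reduced -/

/-- possible last output letter -/
def Val (q p x : Lt) : Prop :=
  match p with
  | Lt.a => if x = Lt.B then q = Lt.a else q = Lt.b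
  | Lt.A => q = Lt.A
  | Lt.b => if x = Lt.A then q = Lt.b ∨ q = Lt.A else q = Lt.b
  | Lt.B => q = Lt.B ∨ q = Lt.a

lemma Val_step (q p x n : Lt) (h1 : ok p x = true) (h2 : ok x n = true) (hv : Val q p x) :
    ChL (fun x y => ok x y = true) q (out p x n) ∧ Val ((out p x n).getLastD q) x n := by
  revert h1 h2 hv
  cases q <;> cases p <;> cases x <;> cases n <;> simp [Val, ok, out, ChL]

lemma ChL_append (S : Lt → Lt → Prop) (p : Lt) (L M : List Lt) (h1 : ChL S p L)
    (h2 : ChL S (L.getLastD p) M) : ChL S p (L ++ M) := by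
  induction L generalizing p with
  | nil => exact h2
  | cons x L ih =>
    rw [List.getLastD_cons] at h2
    exact ⟨h1.1, ih _ h1.2 h2⟩

lemma getLastD_app (p : Lt) (L M : List Lt) :
    (L ++ M).getLastD p = M.getLastD (L.getLastD p) := by
  induction L generalizing p with
  | nil => rfl
  | cons x L ih => rw [List.cons_append, List.getLastD_cons, List.getLastD_cons, ih]

lemma Ch_head {S : Lt → Lt → Prop} {p y : Lt} {L : List Lt} (h : Ch S p L y) : S p (L.headD y) := by
  cases L with
  | nil => exact h
  | cons x L => exact h.1

lemma Val_T (q p : Lt) (L : List Lt) (y : Lt) (hc : Ch (fun x y => ok x y = true) p L y)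
    (hv : Val q p (L.headD y)) :
    ChL (fun x y => ok x y = true) q (T p L y) ∧ Val ((T p L y).getLastD q) (L.getLastD p) y := by
  induction L generalizing p q with
  | nil => exact ⟨trivial, hv⟩
  | cons x L ih =>
    obtain ⟨h1, h2⟩ := Val_step q p x (L.headD y) hc.1 (Ch_head hc.2) hv
    obtain ⟨h3, h4⟩ := ih _ x hc.2 h2
    rw [T, getLastD_app, List.getLastD_cons]
    exact ⟨ChL_append _ _ _ _ h1 h3, h4⟩

lemma Val_exists (p x : Lt) : ∃ q, Val q p x := by
  cases p <;> simp only [Val] <;> try split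
  all_goals first | exact ⟨_, rfl⟩ | exact ⟨_, Or.inl rfl⟩

lemma Val_cyc (L : List Lt) (hL : L ≠ []) (hc : CR L) (hT : Tc L ≠ []) :
    Val ((Tc L).getLastD Lt.a) (L.getLastD Lt.a) (L.headD Lt.a) := by
  obtain ⟨q, hq⟩ := Val_exists (L.getLastD Lt.a) (L.headD Lt.a)
  have hch := Ch_cyc _ L hL Lt.a hc
  obtain ⟨h1, h2⟩ := Val_T q _ L (L.headD Lt.a) hch (by cases L <;> exact hq)
  rw [getLastD_idem] at h2
  rw [getLastD_ne hT _ q]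
  exact h2

lemma CR_Tc (L : List Lt) (hc : CR L) : CR (Tc L) := by
  by_cases hT : Tc L = []
  · rw [hT]; trivial
  have hL : L ≠ [] := by rintro rfl; exact hT rfl
  have hch := Ch_cyc _ L hL Lt.a hc
  exact (Val_T _ _ L (L.headD Lt.a) hch
    (by have := Val_cyc L hL hc hT; cases L <;> exact this)).1

/-! ### second order properties -/

lemma P_T_noBB (s p : Lt) (L : List Lt) (y z : Lt) (hc : Ch (fun x y => ok x y = true) p L y)
    (hb : Ch (fun x y => ¬ (x = Lt.b ∧ y = Lt.b)) p L y)
    (hy : y.isA = true → z = y) : P s (T p L y) z = 0 := by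
  induction L generalizing s p with
  | nil => rfl
  | cons x L ih =>
    have ihp := fun s => ih s x hc.2 hb.2
    have hn : x = Lt.b → L.headD y ≠ Lt.A → nxA L z ≠ Lt.A := by
      rintro rfl hA
      have h1 := Ch_head hc.2
      have h2 := Ch_head hb.2
      have h3 : L.headD y = Lt.a := by
        generalize L.headD y = w at *
        cases w <;> simp [ok] at *
      cases L with
      | nil =>
        simp only [List.headD_nil] at h3
        subst h3
        simp [nxA, hy rfl]
      | cons x L =>
        simp only [List.headD_cons] at h3
        subst h3
        simp [nxA, isA]
    rw [T]
    cases x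
    · simp only [out]
      split <;> simpa [P, isA] using ihp _
    · simp only [out]
      split <;> simpa [P, isA] using ihp _
    · simp only [out]
      split
      · simpa using ihp _
      · rename_i h
        simpa [P, isA, nxA_T, hn rfl h] using ihp _
    · simp only [out]
      split <;> simpa [P, isA] using ihp _

/-- number of junctions `b a⁻¹` -/
def J : Lt → List Lt → ℕ
  | _, [] => 0
  | p, x :: L => (if p = Lt.b ∧ x = Lt.A then 1 else 0) + J x L

/-- number of junctions `a b⁻¹` -/
def Jm : Lt → List Lt → ℕ
  | _, [] => 0
  | p, x :: L => (if p = Lt.a ∧ x = Lt.B then 1 else 0) + Jm x L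

/-- number of `a`-letters -/
def nA : List Lt → ℕ
  | [] => 0
  | x :: L => (if x.isA then 1 else 0) + nA L

lemma J_append (p : Lt) (L M : List Lt) : J p (L ++ M) = J p L + J (L.getLastD p) M := by
  induction L generalizing p with
  | nil => simp [J]
  | cons x L ih => rw [List.cons_append, List.getLastD_cons, J, J, ih]; omega

lemma Jm_append (p : Lt) (L M : List Lt) : Jm p (L ++ M) = Jm p L + Jm (L.getLastD p) M := by
  induction L generalizing p with
  | nil => simp [Jm]
  | cons x L ih => rw [List.cons_append, List.getLastD_cons, Jm, Jm, ih]; omega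

lemma C_step (q p x n : Lt) (h1 : ok p x = true) (h2 : ok x n = true) (hv : Val q p x)
    (hk : ¬ (p = Lt.A ∧ x = Lt.b ∧ n = Lt.A)) (hq : p = Lt.b → x = Lt.A → q = Lt.b) :
    ChL (fun x y => ¬ (x = Lt.A ∧ y = Lt.A)) q (out p x n) ∧
    J q (out p x n) = (if p = Lt.b ∧ x = Lt.A then 1 else 0) ∧
    (x = Lt.b → n = Lt.A → (out p x n).getLastD q = Lt.b) := by
  revert h1 h2 hv hk hq
  cases q <;> cases p <;> cases x <;> cases n <;> simp [Val, ok, out, ChL, J]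

lemma C_T (q s p : Lt) (L : List Lt) (y z : Lt) (hc : Ch (fun x y => ok x y = true) p L y)
    (hP : P s L z = 0) (hy : y = Lt.A → z = Lt.A) (hs : p = Lt.A → s = Lt.A)
    (hv : Val q p (L.headD y)) (hq : p = Lt.b → L.headD y = Lt.A → q = Lt.b) :
    ChL (fun x y => ¬ (x = Lt.A ∧ y = Lt.A)) q (T p L y) ∧ J q (T p L y) = J p L := by
  induction L generalizing q s p with
  | nil => exact ⟨trivial, rfl⟩
  | cons x L ih =>
    rw [P] at hP
    obtain ⟨hP1, hP2⟩ := Nat.add_eq_zero_iff.1 hP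
    have hk : ¬ (p = Lt.A ∧ x = Lt.b ∧ L.headD y = Lt.A) := by
      rintro ⟨rfl, rfl, h3⟩
      have : nxA L z = Lt.A := by
        cases L with
        | nil => exact hy h3
        | cons x L => simp only [List.headD_cons] at h3; subst h3; rfl
      simp [hs rfl, this] at hP1
    have hV := Val_step q p x (L.headD y) hc.1 (Ch_head hc.2) hv
    obtain ⟨h1, h2, h3⟩ := C_step q p x (L.headD y) hc.1 (Ch_head hc.2) hv hk hq
    obtain ⟨h4, h5⟩ := ih _ _ x hc.2 hP2 (by rintro rfl; rfl) hV.2 h3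
    rw [T, J_append, h2, h5]
    exact ⟨ChL_append _ _ _ _ h1 h4, rfl⟩

lemma P_last (s c : Lt) (L : List Lt) (hL : L ≠ []) (h : L.getLastD c = Lt.b)
    (hs : stA s L = Lt.A) : 0 < P s L Lt.A := by
  induction L generalizing s c with
  | nil => exact absurd rfl hL
  | cons x L ih =>
    rw [List.getLastD_cons] at h
    rw [stA] at hs
    rw [P]
    cases L with
    | nil =>
      simp only [List.getLastD_nil] at h
      subst h
      simp [stA, isA] at hs
      simp [hs, nxA]
    | cons x2 L => exact Nat.add_pos_right _ (ih _ _ (by simp) h hs)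

lemma stA_last (s c : Lt) (L : List Lt) (hL : L ≠ []) (h : L.getLastD c = Lt.A) :
    stA s L = Lt.A := by
  induction L generalizing s c with
  | nil => exact absurd rfl hL
  | cons x L ih =>
    rw [List.getLastD_cons] at h
    rw [stA]
    cases L with
    | nil => simp only [List.getLastD_nil] at h; subst h; rfl
    | cons x2 L => exact ih _ _ (by simp) h

lemma C_cyc (L : List Lt) (hL : L ≠ []) (hc : CR L) (hT : Tc L ≠ []) (hP : Pc L = 0) :
    ChL (fun x y => ¬ (x = Lt.A ∧ y = Lt.A)) ((Tc L).getLastD Lt.a) (Tc L) ∧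
    J ((Tc L).getLastD Lt.a) (Tc L) = J (L.getLastD Lt.a) L := by
  have hch := Ch_cyc _ L hL Lt.a hc
  have hV := Val_cyc L hL hc hT
  have hh : L.headD (L.headD Lt.a) = L.headD Lt.a := by cases L <;> rfl
  refine C_T _ (stA Lt.b L) _ L _ (nxA L Lt.b) hch hP ?_ ?_ ?_ ?_
  · intro h; rw [nxA_head Lt.a L hL (by rw [h]; rfl), h]
  · intro h; exact stA_last _ _ _ hL h
  · rw [hh]; exact hV
  · rw [hh]
    intro h1 h2
    rw [h1, h2] at hV
    simp only [Val, if_true] at hV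
    rcases hV with h | h
    · exact h
    · exfalso
      have h3 := stA_last Lt.b _ _ hT h
      rw [Tc, stA_T] at h3
      have h4 : nxA L Lt.b = Lt.A := by rw [nxA_head Lt.a L hL (by rw [h2]; rfl), h2]
      have := P_last Lt.b _ L hL h1 h3
      rw [Pc, h4, h3] at hP
      have h5 := P_last Lt.A Lt.a L hL h1 (by rw [stA_eq_of_isA _ L h4 Lt.b, h3])
      omega

lemma ok_th (x y : Lt) : ok x.th y.th = ok x y := by cases x <;> cases y <;> rfl

lemma tht_getLastD (L : List Lt) (p : Lt) : (tht L).getLastD p.th = (L.getLastD p).th := by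
  induction L generalizing p with
  | nil => rfl
  | cons x L ih =>
    change (x.th :: tht L).getLastD _ = _
    rw [List.getLastD_cons, List.getLastD_cons, ih]

lemma ChL_tht (S S2 : Lt → Lt → Prop) (hS : ∀ x y, S x y → S2 x.th y.th) (p : Lt) (L : List Lt)
    (h : ChL S p L) : ChL S2 p.th (tht L) := by
  induction L generalizing p with
  | nil => trivial
  | cons x L ih => exact ⟨hS _ _ h.1, ih _ h.2⟩

lemma tht_ne {L : List Lt} (h : L ≠ []) : tht L ≠ [] := by simpa [tht] using h

lemma CR_tht (L : List Lt) (h : CR L) : CR (tht L) := by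
  by_cases hL : L = []
  · subst hL; trivial
  have := ChL_tht _ (fun x y => ok x y = true) (fun x y h => by rw [ok_th]; exact h) _ _ h
  rw [← tht_getLastD] at this
  rw [CR, getLastD_ne (tht_ne hL) _ Lt.a.th]
  exact this

/-- the key vanishing -/
lemma Pc_TthT (L : List Lt) (hc : CR L) (hP : Pc L = 0) : Pc (Tc (tht (Tc L))) = 0 := by
  by_cases hT : Tc L = []
  · rw [hT]; rfl
  have hL : L ≠ [] := by rintro rfl; exact hT rfl
  have h1 := (C_cyc L hL hc hT hP).1
  have h2 := ChL_tht _ (fun x y => ¬ (x = Lt.b ∧ y = Lt.b))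
    (by intro x y; cases x <;> cases y <;> simp [th]) _ _ h1
  rw [← tht_getLastD, getLastD_ne (tht_ne hT) _ Lt.a] at h2
  have h3 := Ch_cyc _ _ (tht_ne hT) Lt.a h2
  have h4 := Ch_cyc _ _ (tht_ne hT) Lt.a (CR_tht _ (CR_Tc L hc))
  rw [Pc]
  conv_lhs => arg 2; rw [Tc]
  refine P_T_noBB _ _ _ _ _ h4 h3 ?_
  intro h
  rw [Tc, nxA_T]
  exact nxA_head _ _ (tht_ne hT) h _

/-! ### lengths -/

/-- indicator of a junction -/
def cj (p x : Lt) : ℕ := if jn p x then 1 else 0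

lemma out_len (p x n : Lt) : (out p x n).length + cj p x + cj x n =
    1 + (if x.isA then 1 else 0) := by
  cases p <;> cases x <;> cases n <;> simp [out, cj, jn, isA]

lemma cj_eq (p x : Lt) : cj p x = (if p = Lt.b ∧ x = Lt.A then 1 else 0) +
    (if p = Lt.a ∧ x = Lt.B then 1 else 0) := by
  cases p <;> cases x <;> simp [cj, jn]

lemma T_len (p : Lt) (L : List Lt) (y : Lt) :
    (T p L y).length + 2 * (J p L + Jm p L) + cj (L.getLastD p) y =
      L.length + nA L + cj p (L.headD y) := by
  induction L generalizing p with
  | nil => simp [T, J, Jm, nA]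
  | cons x L ih =>
    have := ih x
    have h2 := out_len p x (L.headD y)
    have h3 := cj_eq p x
    rw [T, List.length_append, J, Jm, nA, List.getLastD_cons, List.headD_cons, List.length_cons]
    omega

lemma Tc_len (L : List Lt) : (Tc L).length + 2 * (J (L.getLastD Lt.a) L + Jm (L.getLastD Lt.a) L) =
    L.length + nA L := by
  have := T_len (L.getLastD Lt.a) L (L.headD Lt.a)
  rw [getLastD_idem, show L.headD (L.headD Lt.a) = L.headD Lt.a by cases L <;> rfl] at this
  rw [Tc]
  omega

lemma nA_append (L M : List Lt) : nA (L ++ M) = nA L + nA M := by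
  induction L with
  | nil => simp [nA]
  | cons x L ih => rw [List.cons_append, nA, nA, ih]; omega

lemma nA_T (p : Lt) (L : List Lt) (y : Lt) : nA (T p L y) = nA L := by
  induction L generalizing p with
  | nil => rfl
  | cons x L ih =>
    rw [T, nA_append, ih, nA]
    congr 1
    cases x <;> simp only [out] <;> split <;> simp [nA, isA]

/-! ### inverses -/

lemma iv_cons (x : Lt) (L : List Lt) : iv (x :: L) = iv L ++ [x.inv] := by simp [iv]

lemma inv_invol (x : Lt) : x.inv.inv = x := by cases x <;> rfl

lemma iv_ne {L : List Lt} (h : L ≠ []) : iv L ≠ [] := by simpa [iv] using h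

lemma iv_tht (L : List Lt) : iv (tht L) = tht (iv L) := by
  have : ∀ x : Lt, x.th.inv = x.inv.th := by intro x; cases x <;> rfl
  simp [iv, tht, this]

lemma iv_getLastD (L : List Lt) (y : Lt) : (iv L).getLastD y.inv = (L.headD y).inv := by
  cases L with
  | nil => rfl
  | cons x L => rw [iv_cons, getLastD_app]; rfl

lemma headD_append (L : List Lt) (x y : Lt) : (L ++ [x]).headD y = L.headD x := by
  cases L <;> rfl

lemma iv_headD (L : List Lt) (p : Lt) : (iv L).headD p.inv = (L.getLastD p).inv := by
  induction L generalizing p with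
  | nil => rfl
  | cons x L ih => rw [iv_cons, List.getLastD_cons, headD_append, ih]

lemma T_concat (p : Lt) (L : List Lt) (x y : Lt) :
    T p (L ++ [x]) y = T p L x ++ out (L.getLastD p) x y := by
  induction L generalizing p with
  | nil => simp [T]
  | cons w L ih =>
    rw [List.cons_append, T, T, ih, headD_append, List.getLastD_cons, List.append_assoc]

lemma out_inv (p x n : Lt) : out n.inv x.inv p.inv = iv (out p x n) := by
  cases p <;> cases x <;> cases n <;> rfl

lemma iv_append (L M : List Lt) : iv (L ++ M) = iv M ++ iv L := by simp [iv]

lemma T_iv (p : Lt) (L : List Lt) (y : Lt) : T y.inv (iv L) p.inv = iv (T p L y) := by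
  induction L generalizing p with
  | nil => rfl
  | cons x L ih => rw [iv_cons, T_concat, ih, iv_getLastD, out_inv, T, iv_append]

lemma headD_ne {L : List Lt} (h : L ≠ []) (p q : Lt) : L.headD p = L.headD q := by
  cases L with
  | nil => exact absurd rfl h
  | cons x L => rfl

lemma Tc_iv (L : List Lt) : Tc (iv L) = iv (Tc L) := by
  by_cases hL : L = []
  · subst hL; rfl
  rw [Tc, Tc, ← T_iv, ← iv_getLastD, ← iv_headD, getLastD_ne (iv_ne hL) Lt.a Lt.a.inv,
    headD_ne (iv_ne hL) Lt.a Lt.a.inv]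

lemma Ch_concat (S : Lt → Lt → Prop) (p : Lt) (L : List Lt) (x y : Lt) :
    Ch S p (L ++ [x]) y ↔ Ch S p L x ∧ S x y := by
  induction L generalizing p with
  | nil => simp [Ch]
  | cons w L ih => rw [List.cons_append, Ch, Ch, ih, and_assoc]

lemma Ch_iv (p : Lt) (L : List Lt) (y : Lt) (h : Ch (fun x y => ok x y = true) p L y) :
    Ch (fun x y => ok x y = true) y.inv (iv L) p.inv := by
  have hs : ∀ x y : Lt, ok x y = true → ok y.inv x.inv = true := by
    intro x y; cases x <;> cases y <;> simp [ok, Lt.inv]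
  induction L generalizing p with
  | nil => exact hs _ _ h
  | cons x L ih =>
    rw [iv_cons, Ch_concat]
    exact ⟨ih _ h.2, hs _ _ h.1⟩

lemma Ch_ChL {S : Lt → Lt → Prop} {p : Lt} {L : List Lt} {y : Lt} (h : Ch S p L y) : ChL S p L := by
  induction L generalizing p with
  | nil => trivial
  | cons x L ih => exact ⟨h.1, ih h.2⟩

lemma CR_iv (L : List Lt) (h : CR L) : CR (iv L) := by
  by_cases hL : L = []
  · subst hL; trivial
  have := Ch_ChL (Ch_iv _ _ _ (Ch_cyc _ L hL Lt.a h))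
  rw [← iv_getLastD, getLastD_ne (iv_ne hL) _ Lt.a] at this
  exact this

lemma J_iv_aux (p : Lt) (L : List Lt) (y : Lt) :
    J y.inv (iv L ++ [p.inv]) = Jm p (L ++ [y]) := by
  have h0 : ∀ p y : Lt, J y.inv [p.inv] = Jm p [y] := by
    intro p y; cases p <;> cases y <;> rfl
  induction L generalizing p with
  | nil => exact h0 p y
  | cons x L ih =>
    rw [iv_cons, J_append, ih, getLastD_app, List.getLastD_cons, List.getLastD_nil, h0,
      List.cons_append, Jm, Jm, Jm]
    omega

lemma J_iv (L : List Lt) : J ((iv L).getLastD Lt.a) (iv L) = Jm (L.getLastD Lt.a) L := by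
  cases L with
  | nil => rfl
  | cons x L =>
    rw [iv_cons, getLastD_app, List.getLastD_cons, List.getLastD_nil, J_iv_aux, Jm_append,
      List.getLastD_cons, Jm, Jm, Jm]
    omega

lemma len_lin (L : List Lt) (hc : CR L) (h1 : Pc L = 0) (h2 : Pc (iv L) = 0) :
    (Tc (Tc L)).length + L.length = 2 * (Tc L).length := by
  have e1 := Tc_len L
  have e2 := Tc_len (Tc L)
  have e3 : nA (Tc L) = nA L := nA_T _ _ _
  by_cases hL : L = []
  · subst hL; rfl
  by_cases hT : Tc L = []
  · exfalso
    have h3 : ev L = 1 := by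
      obtain ⟨h, hh⟩ := ev_Tc L
      rw [hT] at hh
      simpa [ev] using hh
    have h4 := CR_len L hc 1
    rw [h3] at h4
    simp [len] at h4
    exact hL h4
  have e4 := (C_cyc L hL hc hT h1).2
  have e5 := (C_cyc (iv L) (iv_ne hL) (CR_iv L hc) (by rw [Tc_iv]; exact iv_ne hT) h2).2
  rw [Tc_iv, J_iv, J_iv] at e5
  omega


/-! ### chains -/

lemma Rp_σ {w : F} {L : List Lt} (h : Rp w L) : Rp (σ w) (Tc L) := by
  obtain ⟨hc, h, rfl⟩ := h
  obtain ⟨k, hk⟩ := ev_Tc L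
  refine ⟨CR_Tc L hc, σ h * k, ?_⟩
  rw [map_mul, map_mul, map_inv, hk]
  group

lemma Rp_τ {w : F} {L : List Lt} (h : Rp w L) : Rp (τ w) (tht (Tc (tht L))) := by
  obtain ⟨hc, h, rfl⟩ := h
  obtain ⟨k, hk⟩ := ev_Tc (tht L)
  refine ⟨CR_tht _ (CR_Tc _ (CR_tht L hc)), ga⁻¹ * TH (σ (TH h)) * TH k, ?_⟩
  rw [τ_eq, ← TH_ev]
  simp only [map_mul, map_inv, TH_ev, hk]
  group

lemma P_le (s : Lt) (L : List Lt) (z : Lt) : P s L z ≤ L.length := by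
  induction L generalizing s with
  | nil => simp [P]
  | cons x L ih =>
    rw [P, List.length_cons]
    have := ih (if x.isA then x else s)
    split <;> omega

/-- the invariant along chains -/
def Inv1 (N n : ℕ) (W : List Lt) : Prop :=
  CR W ∧ Pc W ≤ N - n ∧ (N + 1 ≤ n → Pc (Tc (tht W)) = 0)

lemma Inv1_σ {N n : ℕ} {W : List Lt} (h : Inv1 N n W) : Inv1 N (n + 1) (Tc W) := by
  obtain ⟨h1, h2, h3⟩ := h
  refine ⟨CR_Tc W h1, ?_, fun hn => Pc_TthT W h1 (by omega)⟩
  have h4 := Pc_T_le W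
  rcases Nat.eq_zero_or_pos (Pc W) with h | h
  · omega
  · have := Pc_strict W h1 h
    omega

lemma Inv1_τ {N n : ℕ} {W : List Lt} (h : Inv1 N n W) : Inv1 N n (tht (Tc (tht W))) := by
  obtain ⟨h1, h2, h3⟩ := h
  refine ⟨CR_tht _ (CR_Tc _ (CR_tht W h1)), ?_, fun hn => ?_⟩
  · have := Pc_tht_T_le (tht W) (CR_tht W h1)
    rw [tht_tht] at this
    omega
  · have h4 := Pc_T_le (Tc (tht W))
    have h5 := h3 hn
    rw [tht_tht]
    omega

/-- state after a chain with `n` factors of `σ` -/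
def St (N n : ℕ) (w : F) : Prop := ∃ W, Rp w W ∧ Inv1 N n W ∧ Inv1 N n (iv W)

lemma St_σ {N n : ℕ} {w : F} (h : St N n w) : St N (n + 1) (σ w) := by
  obtain ⟨W, h1, h2, h3⟩ := h
  refine ⟨Tc W, Rp_σ h1, Inv1_σ h2, ?_⟩
  rw [← Tc_iv]
  exact Inv1_σ h3

lemma St_τ {N n : ℕ} {w : F} (h : St N n w) : St N n (τ w) := by
  obtain ⟨W, h1, h2, h3⟩ := h
  refine ⟨_, Rp_τ h1, Inv1_τ h2, ?_⟩
  rw [iv_tht, ← Tc_iv, iv_tht]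
  exact Inv1_τ h3

lemma St_σ_pow {N n : ℕ} {w : F} (h : St N n w) (l : ℕ) : St N (l + n) ((σ ^ l) w) := by
  induction l with
  | zero => simpa using h
  | succ l ih =>
    rw [pow_succ', MulAut.mul_apply, show l + 1 + n = l + n + 1 by omega]
    exact St_σ ih

lemma St_τ_pow {N n : ℕ} {w : F} (h : St N n w) (l : ℕ) : St N n ((τ ^ l) w) := by
  induction l with
  | zero => simpa using h
  | succ l ih =>
    rw [pow_succ', MulAut.mul_apply]
    exact St_τ ih

lemma St_chain {N : ℕ} {w : F} (h : St N 0 w) (c : List (ℕ × ℕ)) :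
    St N (sigmaCount c) (chainC1 c w) := by
  induction c with
  | nil => simpa [sigmaCount, chainC1] using h
  | cons p c ih =>
    have e1 : sigmaCount (p :: c) = p.1 + sigmaCount c := by simp [sigmaCount]
    have e2 : chainC1 (p :: c) w = (τ ^ p.2) ((σ ^ p.1) (chainC1 c w)) := by
      simp [chainC1, MulAut.mul_apply]
    rw [e1, e2]
    exact St_τ_pow (St_σ_pow ih _) _

lemma St_init {N : ℕ} {w : F} (h : cyclen w ≤ N) : St N 0 w := by
  obtain ⟨L, hL⟩ := Rp_exists w
  rw [Rp_cyclen hL] at h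
  refine ⟨L, hL, ⟨hL.1, ?_, by omega⟩, ⟨CR_iv L hL.1, ?_, by omega⟩⟩
  · exact (P_le _ _ _).trans (by omega)
  · refine (P_le _ _ _).trans ?_
    simp only [iv, List.length_reverse, List.length_map]
    omega

lemma lin_lengths {w : F} {Y : List Lt} (h : Rp w (tht Y)) (h1 : Pc Y = 0) (h2 : Pc (iv Y) = 0)
    (j : ℕ) : cyclen ((τ ^ (j + 1)) w) + cyclen w =
      cyclen ((τ ^ j) w) + cyclen (τ w) := by
  induction j generalizing w Y with
  | zero => simp [add_comm]
  | succ j ih =>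
    have hr : Rp (τ w) (tht (Tc Y)) := by
      have := Rp_τ h
      rwa [tht_tht] at this
    have hr2 : Rp (τ (τ w)) (tht (Tc (Tc Y))) := by
      have := Rp_τ hr
      rwa [tht_tht] at this
    have hY : CR Y := by
      have := CR_tht _ h.1
      rwa [tht_tht] at this
    have h3 := Pc_T_le Y
    have h4 := Pc_T_le (iv Y)
    rw [Tc_iv] at h4
    have := ih hr (by omega) (by omega)
    have hl := len_lin Y hY h1 h2
    have e0 := Rp_cyclen h
    have e1 := Rp_cyclen hr
    have e2 := Rp_cyclen hr2
    simp only [tht, List.length_map] at e0 e1 e2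
    simp only [pow_succ, MulAut.mul_apply] at this ⊢
    omega

lemma stable_iff {N : ℕ} {w : F} (h : cyclen w ≤ N) (c : List (ℕ × ℕ))
    (hc : N + 1 ≤ sigmaCount c) (j : ℕ) :
    cyclen ((τ ^ (j + 1)) ((τ * chainC1 c) w)) = cyclen ((τ ^ j) ((τ * chainC1 c) w)) ↔
      cyclen (τ ((τ * chainC1 c) w)) = cyclen ((τ * chainC1 c) w) := by
  obtain ⟨W, hW, h2, h3⟩ := St_chain (St_init h) c
  have hr := Rp_τ hW
  have h4 := h3.2.2 hc
  rw [← iv_tht, Tc_iv] at h4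
  have := lin_lengths hr (h2.2.2 hc) h4 j
  rw [MulAut.mul_apply]
  omega

/-- Corollary 4.5 (iii):  here `k = ‖u‖ + 1` and `ψ = τψ₂ = chainC1 ((0,1) :: c₂)`. -/
theorem stmt11 (u v : F) (huv : cyclen v ≤ cyclen u)
    (c₂ : List (ℕ × ℕ)) (hne : c₂ ≠ []) (hσ : cyclen u + 2 ≤ sigmaCount c₂)
    (H : ∀ c' : List (ℕ × ℕ), c' ≠ [] → chainLen c' ≤ 1 + chainLen c₂ →
      ((cyclen ((σ ^ (cyclen u + 2)) (chainC1 c' u)) = cyclen ((σ ^ (cyclen u + 1)) (chainC1 c' u)) ↔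
        cyclen ((σ ^ (cyclen u + 2)) (chainC1 c' v)) = cyclen ((σ ^ (cyclen u + 1)) (chainC1 c' v))) ∧
       (cyclen ((τ ^ (cyclen u + 2)) (chainC1 c' u)) = cyclen ((τ ^ (cyclen u + 1)) (chainC1 c' u)) ↔
        cyclen ((τ ^ (cyclen u + 2)) (chainC1 c' v)) = cyclen ((τ ^ (cyclen u + 1)) (chainC1 c' v))))) :
    cyclen (τ ((τ * chainC1 c₂) u)) = cyclen ((τ * chainC1 c₂) u) ↔
      cyclen (τ ((τ * chainC1 c₂) v)) = cyclen ((τ * chainC1 c₂) v) := by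
  have e : chainC1 ((0, 1) :: c₂) = τ * chainC1 c₂ := by simp [chainC1]
  have h := (H ((0, 1) :: c₂) (by simp) (by simp [chainLen, sigmaCount, tauCount]; omega)).2
  rw [e] at h
  rw [← stable_iff le_rfl c₂ (by omega) (cyclen u + 1),
    ← stable_iff huv c₂ (by omega) (cyclen u + 1)]
  exact h
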